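/- Let k ∈ ℕ and let K, K' be Kripke models over Φ with teams T, T' such that K,T ⇌ₖ₊₁ K',T'. Then for every team S with T[R]S there is a team S' with T'[R']S' and K,S ⇌ₖ K',S', and conversely for every team S' with T'[R']S' there is a team S with T[R]S and K,S ⇌ₖ K',S'. -/

import Mathlib

namespace MDLTeam

/-- A Kripke model over a set `Φ` of proposition symbols: a set `W` of worlds,
an accessibility relation `R` and a valuation `V`.  A team of `K` is a subset of `K.W`. -/
structure Kripke (Φ : Type) : Type 1 where
  W : Type
  R : W → W → Prop
  V : Φ → Set W

namespace Kripke

variable {Φ : Type}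

/-- `R[T] = {v | ∃ w ∈ T, w R v}` -/
def img (K : Kripke Φ) (T : Set K.W) : Set K.W := {v | ∃ w ∈ T, K.R w v}

/-- `R⁻¹[S] = {w | ∃ v ∈ S, w R v}` -/
def pre (K : Kripke Φ) (S : Set K.W) : Set K.W := {w | ∃ v ∈ S, K.R w v}

/-- `T[R]S` iff `S ⊆ R[T]` and `T ⊆ R⁻¹[S]`. -/
def trs (K : Kripke Φ) (T S : Set K.W) : Prop := S ⊆ K.img T ∧ T ⊆ K.pre S

end Kripke

/-- Formulas of modal logic `ML(Φ)` in negation normal form. -/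
inductive MLFrm (Φ : Type) : Type
  | atom (p : Φ)
  | natom (p : Φ)
  | and (φ ψ : MLFrm Φ)
  | or (φ ψ : MLFrm Φ)
  | dia (φ : MLFrm Φ)
  | box (φ : MLFrm Φ)
  deriving DecidableEq

namespace MLFrm

variable {Φ : Type}

/-- Team semantics for `ML`. -/
def sat (K : Kripke Φ) : MLFrm Φ → Set K.W → Prop
  | atom p, T => T ⊆ K.V p
  | natom p, T => T ∩ K.V p = ∅
  | and φ ψ, T => sat K φ T ∧ sat K ψ T
  | or φ ψ, T => ∃ T₁ T₂, T = T₁ ∪ T₂ ∧ sat K φ T₁ ∧ sat K ψ T₂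
  | dia φ, T => ∃ S, K.trs T S ∧ sat K φ S
  | box φ, T => sat K φ (K.img T)

/-- Standard (pointwise) Kripke semantics for `ML`. -/
def psat (K : Kripke Φ) : MLFrm Φ → K.W → Prop
  | atom p, w => w ∈ K.V p
  | natom p, w => w ∉ K.V p
  | and φ ψ, w => psat K φ w ∧ psat K ψ w
  | or φ ψ, w => psat K φ w ∨ psat K ψ w
  | dia φ, w => ∃ v, K.R w v ∧ psat K φ v
  | box φ, w => ∀ v, K.R w v → psat K φ v

/-- Modal depth. -/
def md : MLFrm Φ → ℕ
  | atom _ => 0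
  | natom _ => 0
  | and φ ψ => max (md φ) (md ψ)
  | or φ ψ => max (md φ) (md ψ)
  | dia φ => md φ + 1
  | box φ => md φ + 1

end MLFrm

/-- Formulas of `ML(⊻)(Φ)`: modal logic with intuitionistic disjunction. -/
inductive MLI (Φ : Type) : Type
  | atom (p : Φ)
  | natom (p : Φ)
  | and (φ ψ : MLI Φ)
  | or (φ ψ : MLI Φ)
  | dia (φ : MLI Φ)
  | box (φ : MLI Φ)
  | idis (φ ψ : MLI Φ)
  deriving DecidableEq

namespace MLI

variable {Φ : Type}

/-- Team semantics for `ML(⊻)`. -/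
def sat (K : Kripke Φ) : MLI Φ → Set K.W → Prop
  | atom p, T => T ⊆ K.V p
  | natom p, T => T ∩ K.V p = ∅
  | and φ ψ, T => sat K φ T ∧ sat K ψ T
  | or φ ψ, T => ∃ T₁ T₂, T = T₁ ∪ T₂ ∧ sat K φ T₁ ∧ sat K ψ T₂
  | dia φ, T => ∃ S, K.trs T S ∧ sat K φ S
  | box φ, T => sat K φ (K.img T)
  | idis φ ψ, T => sat K φ T ∨ sat K ψ T

/-- Modal depth. -/
def md : MLI Φ → ℕ
  | atom _ => 0
  | natom _ => 0
  | and φ ψ => max (md φ) (md ψ)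
  | or φ ψ => max (md φ) (md ψ)
  | dia φ => md φ + 1
  | box φ => md φ + 1
  | idis φ ψ => max (md φ) (md ψ)

/-- The number of occurrences of the connective `⊻` in a formula. -/
def occIdis : MLI Φ → ℕ
  | atom _ => 0
  | natom _ => 0
  | and φ ψ => occIdis φ + occIdis ψ
  | or φ ψ => occIdis φ + occIdis ψ
  | dia φ => occIdis φ
  | box φ => occIdis φ
  | idis φ ψ => occIdis φ + occIdis ψ + 1

/-- The number of symbols in a formula. -/
def size : MLI Φ → ℕ
  | atom _ => 1
  | natom _ => 2
  | and φ ψ => size φ + size ψ + 1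
  | or φ ψ => size φ + size ψ + 1
  | dia φ => size φ + 1
  | box φ => size φ + 1
  | idis φ ψ => size φ + size ψ + 1

end MLI

/-- Formulas of extended modal dependence logic `EMDL(Φ)`: `ML` extended by
dependence atoms `dep(ψ₁,…,ψₙ,θ)` with `ψ₁,…,ψₙ,θ ∈ ML(Φ)`. -/
inductive EMDL (Φ : Type) : Type
  | atom (p : Φ)
  | natom (p : Φ)
  | and (φ ψ : EMDL Φ)
  | or (φ ψ : EMDL Φ)
  | dia (φ : EMDL Φ)
  | box (φ : EMDL Φ)
  | dep (l : List (MLFrm Φ)) (θ : MLFrm Φ)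

namespace EMDL

variable {Φ : Type}

/-- Team semantics for `EMDL`. -/
def sat (K : Kripke Φ) : EMDL Φ → Set K.W → Prop
  | atom p, T => T ⊆ K.V p
  | natom p, T => T ∩ K.V p = ∅
  | and φ ψ, T => sat K φ T ∧ sat K ψ T
  | or φ ψ, T => ∃ T₁ T₂, T = T₁ ∪ T₂ ∧ sat K φ T₁ ∧ sat K ψ T₂
  | dia φ, T => ∃ S, K.trs T S ∧ sat K φ S
  | box φ, T => sat K φ (K.img T)
  | dep l θ, T => ∀ w ∈ T, ∀ v ∈ T,
      (∀ ψ ∈ l, (MLFrm.sat K ψ {w} ↔ MLFrm.sat K ψ {v})) →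
      (MLFrm.sat K θ {w} ↔ MLFrm.sat K θ {v})

end EMDL

variable {Φ : Type}

/-- `k`-bisimilarity of pointed models. -/
def bisim (K K' : Kripke Φ) : ℕ → K.W → K'.W → Prop
  | 0, w, w' => ∀ p, w ∈ K.V p ↔ w' ∈ K'.V p
  | k + 1, w, w' =>
      (∀ p, w ∈ K.V p ↔ w' ∈ K'.V p) ∧
      (∀ v, K.R w v → ∃ v', K'.R w' v' ∧ bisim K K' k v v') ∧
      (∀ v', K'.R w' v' → ∃ v, K.R w v ∧ bisim K K' k v v')

/-- Team `k`-bisimilarity: `K,T ⇌ₖ K',T'`. -/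
def tbisim (K K' : Kripke Φ) (k : ℕ) (T : Set K.W) (T' : Set K'.W) : Prop :=
  (∀ w ∈ T, ∃ w' ∈ T', bisim K K' k w w') ∧
  (∀ w' ∈ T', ∃ w ∈ T, bisim K K' k w w')

/-- `M(φ,K)`: the set of maximal teams satisfying `φ` in `K` (for `ML(⊻)`). -/
def MLI.Mset (K : Kripke Φ) (φ : MLI Φ) : Set (Set K.W) :=
  {T | MLI.sat K φ T ∧ ∀ S, MLI.sat K φ S → T ⊆ S → S = T}

/-- `N(φ,K)`: the family of minimal teams not satisfying `φ` in `K` (for `ML(⊻)`). -/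
def MLI.Nset (K : Kripke Φ) (φ : MLI Φ) : Set (Set K.W) :=
  {T | ¬ MLI.sat K φ T ∧ ∀ S, ¬ MLI.sat K φ S → S ⊆ T → S = T}

/-- The upper dimension `Dim(φ)` of an `ML(⊻)`-formula: the least `m` such that
`|M(φ,K)| ≤ m` for every Kripke model `K` over `Φ`. -/
noncomputable def MLI.Dim (φ : MLI Φ) : ℕ :=
  sInf {m : ℕ | ∀ K : Kripke Φ, (MLI.Mset K φ).Finite ∧ (MLI.Mset K φ).ncard ≤ m}

/-- The lower dimension `dim(φ)` of an `ML(⊻)`-formula: the least `n` such that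
`|T| ≤ n` for every Kripke model `K` over `Φ` and every `T ∈ N(φ,K)`. -/
noncomputable def MLI.ldim (φ : MLI Φ) : ℕ :=
  sInf {n : ℕ | ∀ K : Kripke Φ, ∀ T ∈ MLI.Nset K φ, T.Finite ∧ T.ncard ≤ n}

/-- `M(φ,K)`: the set of maximal teams satisfying `φ` in `K` (for `EMDL`). -/
def EMDL.Mset (K : Kripke Φ) (φ : EMDL Φ) : Set (Set K.W) :=
  {T | EMDL.sat K φ T ∧ ∀ S, EMDL.sat K φ S → T ⊆ S → S = T}

/-- The upper dimension `Dim(φ)` of an `EMDL`-formula. -/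
noncomputable def EMDL.Dim (φ : EMDL Φ) : ℕ :=
  sInf {m : ℕ | ∀ K : Kripke Φ, (EMDL.Mset K φ).Finite ∧ (EMDL.Mset K φ).ncard ≤ m}

/-- The `Ψ`-type of a state: `type_Ψ(K,w) = {ψ ∈ Ψ | K,w ⊨ ψ}`. -/
def typeSet (K : Kripke Φ) (Ψ : Set (MLFrm Φ)) (w : K.W) : Set (MLFrm Φ) :=
  {ψ | ψ ∈ Ψ ∧ MLFrm.psat K ψ w}

/-- `tset_Ψ(K,T) = {type_Ψ(K,w) | w ∈ T}`. -/
def tset (K : Kripke Φ) (Ψ : Set (MLFrm Φ)) (T : Set K.W) : Set (Set (MLFrm Φ)) :=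
  typeSet K Ψ '' T

/-!
Both `T[R]S` and `K,T ⇌ₖ K',T'` are instances of one construction, the Egli–Milner lifting of a
relation from points to sets. This lifting is monotone and commutes with composition and with
converse. The forth condition says that `(⇌ᵏ⁺¹)⁻¹` followed by `R` is contained in `R'` followed
by `(⇌ᵏ)⁻¹`; lifting this inclusion to teams produces `S'`. The converse half is the same argument
applied to the back condition, with `⇌` replaced by its converse.
-/

section EgliMilner

variable {α β γ α' β' : Type*}

/-- The Egli–Milner (back-and-forth) lifting of a relation from points to sets, the common form of
the team transition `T[R]S` and of team bisimilarity. -/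
def EgliMilner (r : α → β → Prop) (s : Set α) (t : Set β) : Prop :=
  (∀ a ∈ s, ∃ b ∈ t, r a b) ∧ (∀ b ∈ t, ∃ a ∈ s, r a b)

theorem egliMilner_flip {r : α → β → Prop} {s : Set α} {t : Set β} :
    EgliMilner (flip r) t s ↔ EgliMilner r s t :=
  and_comm

theorem EgliMilner.mono {r p : α → β → Prop} (hrp : ∀ a b, r a b → p a b) {s : Set α} {t : Set β}
    (h : EgliMilner r s t) : EgliMilner p s t :=
  ⟨fun a ha ↦ (h.1 a ha).imp fun b ↦ And.imp_right (hrp a b),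
    fun b hb ↦ (h.2 b hb).imp fun a ↦ And.imp_right (hrp a b)⟩

theorem EgliMilner.comp {r : α → β → Prop} {p : β → γ → Prop} {s : Set α} {t : Set β} {u : Set γ}
    (hr : EgliMilner r s t) (hp : EgliMilner p t u) : EgliMilner (Relation.Comp r p) s u := by
  constructor
  · intro a ha
    obtain ⟨b, hb, hab⟩ := hr.1 a ha
    obtain ⟨c, hc, hbc⟩ := hp.1 b hb
    exact ⟨c, hc, b, hab, hbc⟩
  · intro c hc
    obtain ⟨b, hb, hbc⟩ := hp.2 c hc
    obtain ⟨a, ha, hab⟩ := hr.2 b hb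
    exact ⟨a, ha, b, hab, hbc⟩

theorem EgliMilner.exists_of_comp {r : α → β → Prop} {p : β → γ → Prop} {s : Set α} {u : Set γ}
    (h : EgliMilner (Relation.Comp r p) s u) : ∃ t, EgliMilner r s t ∧ EgliMilner p t u := by
  refine ⟨{b | (∃ a ∈ s, r a b) ∧ ∃ c ∈ u, p b c}, ⟨?_, fun b hb ↦ hb.1⟩, fun b hb ↦ hb.2, ?_⟩
  · intro a ha
    obtain ⟨c, hc, b, hab, hbc⟩ := h.1 a ha
    exact ⟨b, ⟨⟨a, ha, hab⟩, c, hc, hbc⟩, hab⟩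
  · intro c hc
    obtain ⟨a, ha, b, hab, hbc⟩ := h.2 c hc
    exact ⟨b, ⟨⟨a, ha, hab⟩, c, hc, hbc⟩, hbc⟩

theorem EgliMilner.exists_of_forth {r : α → β → Prop} {r' : α' → β' → Prop}
    {p : α → α' → Prop} {q : β → β' → Prop}
    (forth : ∀ a a' b, p a a' → r a b → ∃ b', r' a' b' ∧ q b b')
    {s : Set α} {s' : Set α'} {t : Set β} (hp : EgliMilner p s s') (hr : EgliMilner r s t) :
    ∃ t', EgliMilner r' s' t' ∧ EgliMilner q t t' := by
  have lifted_square : EgliMilner (Relation.Comp r' (flip q)) s' t :=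
    ((egliMilner_flip.2 hp).comp hr).mono fun a' b ⟨a, hpa, hab⟩ ↦ forth a a' b hpa hab
  obtain ⟨t', hr', hq⟩ := lifted_square.exists_of_comp
  exact ⟨t', hr', egliMilner_flip.1 hq⟩

theorem EgliMilner.exists_of_back {r : α → β → Prop} {r' : α' → β' → Prop}
    {p : α → α' → Prop} {q : β → β' → Prop}
    (back : ∀ a a' b', p a a' → r' a' b' → ∃ b, r a b ∧ q b b')
    {s : Set α} {s' : Set α'} {t' : Set β'} (hp : EgliMilner p s s') (hr' : EgliMilner r' s' t') :
    ∃ t, EgliMilner r s t ∧ EgliMilner q t t' := by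
  obtain ⟨t, hr, hq⟩ := (egliMilner_flip.2 hp).exists_of_forth (q := flip q)
    (fun a' a b' hpa hab' ↦ back a a' b' hpa hab') hr'
  exact ⟨t, hr, egliMilner_flip.1 hq⟩

end EgliMilner

theorem Kripke.trs_iff_egliMilner {K : Kripke Φ} {T S : Set K.W} :
    K.trs T S ↔ EgliMilner K.R T S :=
  and_comm

theorem tbisim_iff_egliMilner {K K' : Kripke Φ} {k : ℕ} {T : Set K.W} {T' : Set K'.W} :
    tbisim K K' k T T' ↔ EgliMilner (bisim K K' k) T T' :=
  Iff.rfl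

theorem bisim.forth {K K' : Kripke Φ} {k : ℕ} {w v : K.W} {w' : K'.W}
    (h : bisim K K' (k + 1) w w') (hv : K.R w v) : ∃ v', K'.R w' v' ∧ bisim K K' k v v' :=
  h.2.1 v hv

theorem bisim.back {K K' : Kripke Φ} {k : ℕ} {w : K.W} {w' v' : K'.W}
    (h : bisim K K' (k + 1) w w') (hv' : K'.R w' v') : ∃ v, K.R w v ∧ bisim K K' k v v' :=
  h.2.2 v' hv'

/-- If `K,T ⇌ₖ₊₁ K',T'`, then for every team `S` with `T[R]S` there is `S'`
with `T'[R']S'` and `K,S ⇌ₖ K',S'`, and conversely. -/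
theorem tbisim_succ_diamond {Φ : Type} (k : ℕ) (K K' : Kripke Φ)
    (T : Set K.W) (T' : Set K'.W) (h : tbisim K K' (k + 1) T T') :
    (∀ S : Set K.W, K.trs T S → ∃ S' : Set K'.W, K'.trs T' S' ∧ tbisim K K' k S S') ∧
    (∀ S' : Set K'.W, K'.trs T' S' → ∃ S : Set K.W, K.trs T S ∧ tbisim K K' k S S') := by
  simp only [Kripke.trs_iff_egliMilner, tbisim_iff_egliMilner] at h ⊢
  exact ⟨fun S hS ↦ h.exists_of_forth (fun _ _ _ hbisim hR ↦ hbisim.forth hR) hS,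
    fun S' hS' ↦ h.exists_of_back (fun _ _ _ hbisim hR' ↦ hbisim.back hR') hS'⟩

end MDLTeam
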